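/- arXiv:2302.13657 — 2 statements merged into one kernel-verified Lean document; each statement's English description precedes it below -/
import Mathlib

section
/- Let τ contain a single relational symbol R, and fix a (σ,τ)-Pultr template with P = V_1 (the one-vertex σ-structure with empty relations) and Q_R = T(t_R) for an S-term t_R (S a σ-symbol) such that Q_R does not homomorphically map to T(t) for any proper subterm t of t_R. Let Ω be the construction described in the context, defined using the term t_R. Then Ω(V_1^τ), the image under Ω of the τ-structure with one element and empty relation R, is isomorphic to the structure D(t_R). -/
/-!
Every map into the one-point structure `V₁` is constant, so the `t`-entry of an element of `Ω(V₁)`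
is either empty or a singleton, and the element amounts to a Boolean tuple. Since `V₁` has no
tuples in its relations, the map `Γ(A) → V₁` is a homomorphism exactly when no `Q_R` maps to `A`.
Hence every Boolean tuple occurs as soon as no `Q_R` maps to the tree of a V-term in `𝒯_V`, (A1)
becomes (D1), and (A2) says that `&ₜ` fails for each edge term `t` whose tree admits a homomorphism
from some `Q_R`. For a single minimal term `t_R` the only such `t` is `t_R` itself, as witnessed by
the identity of `Q_R`, and this is (D2).
-/

/-- A relational signature: a type of relation symbols, each with a positive arity. -/
structure Signature : Type 1 where
  symb : Type
  ar : symb → ℕ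
  ar_pos : ∀ R, 0 < ar R

/-- A relational structure over the signature `σ`. -/
structure Struct (σ : Signature) : Type 1 where
  dom : Type
  rel : ∀ R : σ.symb, Set (Fin (σ.ar R) → dom)

variable {σ τ υ : Signature}

/-- `f` is a homomorphism of `σ`-structures from `A` to `B`. -/
def IsHom (A B : Struct σ) (f : A.dom → B.dom) : Prop :=
  ∀ R : σ.symb, ∀ x ∈ A.rel R, (fun i => f (x i)) ∈ B.rel R

/-- `A → B`: there exists a homomorphism from `A` to `B`. -/
def HomEx (A B : Struct σ) : Prop := ∃ f, IsHom A B f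

/-- The equivalence `f` is an isomorphism of `σ`-structures from `A` to `B`. -/
def IsIso (A B : Struct σ) (f : A.dom ≃ B.dom) : Prop :=
  ∀ R : σ.symb, ∀ x : Fin (σ.ar R) → A.dom, x ∈ A.rel R ↔ (fun i => f (x i)) ∈ B.rel R

/-- Terms over `σ` whose denotation is a tree rooted in a vertex: `vertex` is a V-term, and
`pr R i ts` denotes the V-term `pr_i(edge_R(ts))`.  (An R-term `edge_R(t_1, …, t_k)` is
represented by the symbol `R` together with the tuple `ts` of V-terms.) -/
inductive VTerm (σ : Signature) : Type
  | vertex : VTerm σ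
  | pr (R : σ.symb) (i : Fin (σ.ar R)) (ts : Fin (σ.ar R) → VTerm σ) : VTerm σ

/-- The domain of the tree denoted by a V-term. -/
def VTerm.domType : VTerm σ → Type
  | .vertex => PUnit
  | .pr R _ ts => (i : Fin (σ.ar R)) × (ts i).domType

/-- The root of the tree denoted by a V-term. -/
def VTerm.root : (t : VTerm σ) → t.domType
  | .vertex => PUnit.unit
  | .pr _ i ts => ⟨i, (ts i).root⟩

/-- The domain of the tree denoted by the R-term `edge_R(ts)`: the disjoint union of the
domains of the subtrees. -/
def edgeDom (R : σ.symb) (ts : Fin (σ.ar R) → VTerm σ) : Type :=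
  (i : Fin (σ.ar R)) × (ts i).domType

/-- The root edge of the tree denoted by the R-term `edge_R(ts)`. -/
def edgeRoot (R : σ.symb) (ts : Fin (σ.ar R) → VTerm σ) : Fin (σ.ar R) → edgeDom R ts :=
  fun i => ⟨i, (ts i).root⟩

/-- The relations of the tree denoted by a V-term: the relations of the disjoint subtrees,
together with the root edge. -/
def VTerm.rel : (t : VTerm σ) → ∀ S : σ.symb, Set (Fin (σ.ar S) → t.domType)
  | .vertex, _ => ∅
  | .pr R _ ts, S =>
      {x | ∃ i : Fin (σ.ar R), ∃ y ∈ (ts i).rel S, x = fun j => ⟨i, y j⟩} ∪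
      {x | ∃ h : R = S, x = fun j => edgeRoot R ts (Fin.cast (congrArg σ.ar h.symm) j)}

/-- The tree `T(t)` denoted by a V-term `t`. -/
def VTerm.tree (t : VTerm σ) : Struct σ := ⟨t.domType, t.rel⟩

/-- The tree `T(t)` denoted by the R-term `t = edge_R(ts)`. -/
def ETerm.tree (R : σ.symb) (ts : Fin (σ.ar R) → VTerm σ) : Struct σ where
  dom := edgeDom R ts
  rel S :=
    {x | ∃ i : Fin (σ.ar R), ∃ y ∈ (ts i).rel S, x = fun j => ⟨i, y j⟩} ∪
    {x | ∃ h : R = S, x = fun j => edgeRoot R ts (Fin.cast (congrArg σ.ar h.symm) j)}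

/-- The V-subterms of a V-term. -/
def VTerm.vsub : VTerm σ → Set (VTerm σ)
  | .vertex => {.vertex}
  | .pr R i ts => insert (.pr R i ts) (⋃ j, (ts j).vsub)

/-- The S-subterms of a V-term, for each `σ`-symbol `S` (an S-term `edge_S(us)` being
represented by the tuple `us`). -/
def VTerm.esub : VTerm σ → ∀ S : σ.symb, Set (Fin (σ.ar S) → VTerm σ)
  | .vertex, _ => ∅
  | .pr R _ ts, S =>
      {us | ∃ h : R = S, us = fun j => ts (Fin.cast (congrArg σ.ar h.symm) j)} ∪
      {us | ∃ j, us ∈ (ts j).esub S}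

/-- A term is either a V-term or an R-term `edge_R(ts)` for some symbol `R`. -/
def Term (σ : Signature) : Type := VTerm σ ⊕ (Σ S : σ.symb, Fin (σ.ar S) → VTerm σ)

/-- The tree denoted by a term. -/
def Term.tree : Term σ → Struct σ
  | .inl t => t.tree
  | .inr ⟨S, ts⟩ => ETerm.tree S ts

/-- The V-subterms of a term. -/
def Term.vsub : Term σ → Set (VTerm σ)
  | .inl t => t.vsub
  | .inr ⟨_, ts⟩ => ⋃ j, (ts j).vsub

/-- The S-subterms of a term. -/
def Term.esub : Term σ → ∀ S : σ.symb, Set (Fin (σ.ar S) → VTerm σ)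
  | .inl t => t.esub
  | .inr ⟨R, ts⟩ => fun S =>
      {us | ∃ h : R = S, us = fun j => ts (Fin.cast (congrArg σ.ar h.symm) j)} ∪
      {us | ∃ j, us ∈ (ts j).esub S}

/-- Tuples of booleans indexed by the V-terms in `TV` whose entry at `vertex` is `true`. -/
def BDom (TV : Set (VTerm σ)) : Type :=
  {v : {t : VTerm σ // t ∈ TV} → Bool // ∀ h : VTerm.vertex ∈ TV, v ⟨.vertex, h⟩ = true}

open Classical in
/-- The entry of `v` at the V-term `t` (by convention `false` if `t ∉ TV`). -/
noncomputable def bext (TV : Set (VTerm σ)) (v : BDom TV) (t : VTerm σ) : Bool :=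
  if h : t ∈ TV then v.1 ⟨t, h⟩ else false

/-- `&ₜ(vs) = (vs 1)_{us 1} ∧ ⋯ ∧ (vs k)_{us k}` for the R-term `t = edge_R(us)`. -/
def andT (TV : Set (VTerm σ)) {R : σ.symb} (us : Fin (σ.ar R) → VTerm σ)
    (vs : Fin (σ.ar R) → BDom TV) : Prop :=
  ∀ j, bext TV (vs j) (us j) = true

/-- The dual structure `D(t_Q)` of the S-term `t_Q = edge_S(tsQ)`. -/
noncomputable def Dual (S : σ.symb) (tsQ : Fin (σ.ar S) → VTerm σ) : Struct σ where
  dom := BDom (Term.vsub (σ := σ) (.inr ⟨S, tsQ⟩))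
  rel R := {vs |
    (∀ us ∈ Term.esub (σ := σ) (.inr ⟨S, tsQ⟩) R, ∀ i : Fin (σ.ar R),
        VTerm.pr R i us ∈ Term.vsub (σ := σ) (.inr ⟨S, tsQ⟩) →
        andT _ us vs → bext _ (vs i) (.pr R i us) = true) ∧
    (∀ h : R = S, ¬ andT _ (fun j => tsQ (Fin.cast (congrArg σ.ar h) j)) vs)}

/-- The central Pultr functor for the template where `P = V₁` is a single vertex with empty
relations, `Q_R = T(tq R)` and the map `ε_{i,R}` selects the element `x R i` of `Q_R`. -/
def GammaV (tq : τ.symb → Term σ) (x : ∀ R : τ.symb, Fin (τ.ar R) → ((tq R).tree).dom)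
    (A : Struct σ) : Struct τ where
  dom := A.dom
  rel R := {y | ∃ r : ((tq R).tree).dom → A.dom, IsHom ((tq R).tree) A r ∧ ∀ i, y i = r (x R i)}

/-- `𝒯_V`: all V-subterms of the chosen terms `t_R`. -/
def TVs (tq : τ.symb → Term σ) : Set (VTerm σ) := ⋃ R, (tq R).vsub

/-- `𝒯_S`: all S-subterms of the chosen terms `t_R`. -/
def TEs (tq : τ.symb → Term σ) (S : σ.symb) : Set (Fin (σ.ar S) → VTerm σ) := ⋃ R, (tq R).esub S

/-- Domain of `Ω(B)`: tuples of sets of homomorphisms `Γ(T(t)) → B`, indexed by `t ∈ 𝒯_V`,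
whose entry at `vertex` is a singleton. -/
def OmVDom (tq : τ.symb → Term σ) (x : ∀ R : τ.symb, Fin (τ.ar R) → ((tq R).tree).dom)
    (B : Struct τ) : Type :=
  {U : (t : {t : VTerm σ // t ∈ TVs tq}) → Set ((t.1.tree).dom → B.dom) //
    (∀ t, ∀ f ∈ U t, IsHom (GammaV tq x t.1.tree) B f) ∧
    (∀ h : VTerm.vertex ∈ TVs tq, ∃! f, f ∈ U ⟨.vertex, h⟩)}

open Classical in
/-- The entry of `U` at the V-term `t` (by convention `∅` if `t ∉ 𝒯_V`). -/
noncomputable def UextV (tq : τ.symb → Term σ)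
    (x : ∀ R : τ.symb, Fin (τ.ar R) → ((tq R).tree).dom)
    (B : Struct τ) (U : OmVDom tq x B) (t : VTerm σ) : Set (t.tree.dom → B.dom) :=
  if h : t ∈ TVs tq then U.1 ⟨t, h⟩ else ∅

/-- `⨉_t(Us) = {f₁ ∪ ⋯ ∪ f_k : f_i ∈ (Us i)_{ts i}}` for the S-term `t = edge_S(ts)`:
maps on the disjoint union all of whose components lie in the prescribed sets. -/
def timesV (tq : τ.symb → Term σ) (x : ∀ R : τ.symb, Fin (τ.ar R) → ((tq R).tree).dom)
    (B : Struct τ) (S : σ.symb) (ts : Fin (σ.ar S) → VTerm σ)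
    (Us : Fin (σ.ar S) → OmVDom tq x B) : Set (edgeDom S ts → B.dom) :=
  {g | ∀ j, (fun z => g ⟨j, z⟩) ∈ UextV tq x B (Us j) (ts j)}

/-- The right adjoint `Ω` for the template with `P = V₁`. -/
noncomputable def OmegaV (tq : τ.symb → Term σ)
    (x : ∀ R : τ.symb, Fin (τ.ar R) → ((tq R).tree).dom) (B : Struct τ) : Struct σ where
  dom := OmVDom tq x B
  rel S := {Us |
    (∀ ts ∈ TEs tq S, ∀ i : Fin (σ.ar S), VTerm.pr S i ts ∈ TVs tq →
        ∀ g ∈ timesV tq x B S ts Us, g ∈ UextV tq x B (Us i) (.pr S i ts)) ∧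
    (∀ ts ∈ TEs tq S, ∀ g ∈ timesV tq x B S ts Us,
        IsHom (GammaV tq x (ETerm.tree S ts)) B g)}

/-- The `τ`-structure with a single element and all relations empty. -/
def VOne (τ : Signature) : Struct τ := ⟨PUnit, fun _ => ∅⟩

theorem HomEx.refl (A : Struct σ) : HomEx A A := ⟨id, fun _ _ h => h⟩

instance : Unique (VOne τ).dom := inferInstanceAs (Unique PUnit)

section Point

variable {tq : τ.symb → Term σ} {x : ∀ R : τ.symb, Fin (τ.ar R) → (tq R).tree.dom}

theorem isHom_gammaV_VOne_iff {A : Struct σ} {f : A.dom → (VOne τ).dom} :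
    IsHom (GammaV tq x A) (VOne τ) f ↔ ∀ R, ¬ HomEx (tq R).tree A := by
  constructor
  · rintro hf R ⟨r, hr⟩
    exact hf R (fun i => r (x R i)) ⟨r, hr, fun _ => rfl⟩
  · rintro hQ R y ⟨r, hr, -⟩
    exact hQ R ⟨r, hr⟩

open Classical in
/-- Elements of `Ω(V₁)` as Boolean tuples: the entry at `t` records whether the unique map
`T(t) → V₁` belongs to `U_t`. -/
noncomputable def omVDomEquivBDom (x : ∀ R : τ.symb, Fin (τ.ar R) → (tq R).tree.dom)
    (hmin : ∀ R, ∀ t ∈ TVs tq, ¬ HomEx (tq R).tree t.tree) :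
    OmVDom tq x (VOne τ) ≃ BDom (TVs tq) where
  toFun U := ⟨fun t => decide (default ∈ U.1 t), fun hvertex => by
    obtain ⟨f, hf, -⟩ := U.2.2 hvertex
    exact decide_eq_true (Subsingleton.elim f default ▸ hf)⟩
  invFun v := ⟨fun t => {_f | v.1 t = true},
    fun t _ _ => isHom_gammaV_VOne_iff.2 fun R => hmin R t t.2,
    fun hvertex => ⟨default, v.2 hvertex, fun _ _ => Subsingleton.elim _ _⟩⟩
  left_inv U := by
    refine Subtype.ext <| funext fun t => Set.ext fun f => ?_
    rw [Subsingleton.elim f default]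
    exact decide_eq_true_iff
  right_inv _ := Subtype.ext <| funext fun _ => Bool.decide_eq_true

variable (hmin : ∀ R, ∀ t ∈ TVs tq, ¬ HomEx (tq R).tree t.tree)

open Classical in
theorem omVDomEquivBDom_eq_true_iff {U : OmVDom tq x (VOne τ)} {t : {t : VTerm σ // t ∈ TVs tq}} :
    (omVDomEquivBDom x hmin U).1 t = true ↔ default ∈ U.1 t :=
  decide_eq_true_iff

theorem mem_UextV_VOne_iff {U : OmVDom tq x (VOne τ)} {t : VTerm σ}
    {f : t.tree.dom → (VOne τ).dom} :
    f ∈ UextV tq x (VOne τ) U t ↔ bext (TVs tq) (omVDomEquivBDom x hmin U) t = true := by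
  rw [Subsingleton.elim f default]
  by_cases ht : t ∈ TVs tq
  · rw [UextV, bext, dif_pos ht, dif_pos ht]
    exact (omVDomEquivBDom_eq_true_iff hmin).symm
  · simp [UextV, bext, ht]

theorem mem_timesV_VOne_iff {S : σ.symb} {ts : Fin (σ.ar S) → VTerm σ}
    {Us : Fin (σ.ar S) → OmVDom tq x (VOne τ)} {g : edgeDom S ts → (VOne τ).dom} :
    g ∈ timesV tq x (VOne τ) S ts Us ↔
      andT (TVs tq) ts (fun j => omVDomEquivBDom x hmin (Us j)) :=
  forall_congr' fun _ => mem_UextV_VOne_iff hmin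

theorem forall_mem_timesV_mem_UextV_iff {S : σ.symb} {ts : Fin (σ.ar S) → VTerm σ}
    {i : Fin (σ.ar S)} {Us : Fin (σ.ar S) → OmVDom tq x (VOne τ)} :
    (∀ g ∈ timesV tq x (VOne τ) S ts Us, g ∈ UextV tq x (VOne τ) (Us i) (.pr S i ts)) ↔
      (andT (TVs tq) ts (fun j => omVDomEquivBDom x hmin (Us j)) →
        bext (TVs tq) (omVDomEquivBDom x hmin (Us i)) (.pr S i ts) = true) := by
  constructor
  · intro hsubset hand
    exact (mem_UextV_VOne_iff hmin).1 (hsubset default ((mem_timesV_VOne_iff hmin).2 hand))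
  · intro himp g hg
    exact (mem_UextV_VOne_iff hmin).2 (himp ((mem_timesV_VOne_iff hmin).1 hg))

theorem forall_mem_timesV_isHom_iff {S : σ.symb} {ts : Fin (σ.ar S) → VTerm σ}
    {Us : Fin (σ.ar S) → OmVDom tq x (VOne τ)} :
    (∀ g ∈ timesV tq x (VOne τ) S ts Us, IsHom (GammaV tq x (ETerm.tree S ts)) (VOne τ) g) ↔
      ∀ R, HomEx (tq R).tree (ETerm.tree S ts) →
        ¬ andT (TVs tq) ts (fun j => omVDomEquivBDom x hmin (Us j)) := by
  constructor
  · intro hisHom R hhom hand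
    exact isHom_gammaV_VOne_iff.1 (hisHom default ((mem_timesV_VOne_iff hmin).2 hand)) R hhom
  · intro hnot g hg
    exact isHom_gammaV_VOne_iff.2 fun R hhom =>
      hnot R hhom ((mem_timesV_VOne_iff hmin).1 hg)

end Point

/-- The dual structure of a template with several terms `t_R`: in place of (D2), `&ₜ` has to fail
for every edge term `t` among the subterms of the `t_R` such that some `Q_R` maps to `T(t)`. -/
noncomputable def TemplateDual (tq : τ.symb → Term σ) : Struct σ where
  dom := BDom (TVs tq)
  rel S := {vs |
    (∀ ts ∈ TEs tq S, ∀ i : Fin (σ.ar S), VTerm.pr S i ts ∈ TVs tq →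
        andT _ ts vs → bext _ (vs i) (.pr S i ts) = true) ∧
    (∀ ts ∈ TEs tq S, ∀ R, HomEx (tq R).tree (ETerm.tree S ts) → ¬ andT _ ts vs)}

theorem omegaV_of_point_iso_dual_general (tq : τ.symb → Term σ)
    (x : ∀ R : τ.symb, Fin (τ.ar R) → (tq R).tree.dom)
    (hmin : ∀ R, ∀ t ∈ TVs tq, ¬ HomEx (tq R).tree t.tree) :
    ∃ f : (OmegaV tq x (VOne τ)).dom ≃ (TemplateDual tq).dom,
      IsIso (OmegaV tq x (VOne τ)) (TemplateDual tq) f := by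
  refine ⟨omVDomEquivBDom x hmin, fun S Us => and_congr ?_ ?_⟩
  · exact forall₂_congr fun _ _ => forall₂_congr fun _ _ => forall_mem_timesV_mem_UextV_iff hmin
  · exact forall₂_congr fun _ _ => forall_mem_timesV_isHom_iff hmin

section ConstantTemplate

variable [Nonempty τ.symb] {tq : τ.symb → Term σ}

theorem TVs_eq_vsub {T : Term σ} (htq : ∀ R, tq R = T) : TVs tq = T.vsub := by
  simp only [TVs, htq, Set.iUnion_const]

theorem TEs_eq_esub {T : Term σ} (htq : ∀ R, tq R = T) : TEs tq = T.esub := by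
  funext S
  simp only [TEs, htq, Set.iUnion_const]

theorem templateDual_eq_dual {S : σ.symb} {ts : Fin (σ.ar S) → VTerm σ}
    (htq : ∀ R, tq R = Sum.inr ⟨S, ts⟩)
    (hmin : ∀ R, ∀ us ∈ Term.esub (σ := σ) (.inr ⟨S, ts⟩) R,
      (Sum.inr ⟨R, us⟩ : Term σ) ≠ Sum.inr ⟨S, ts⟩ →
        ¬ HomEx (ETerm.tree S ts) (ETerm.tree R us)) :
    TemplateDual tq = Dual S ts := by
  unfold TemplateDual Dual
  simp only [htq]
  rw [TVs_eq_vsub htq, TEs_eq_esub htq]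
  congr 1
  funext R
  ext vs
  refine and_congr_right fun _ => ⟨?_, ?_⟩
  · rintro hforbidden rfl
    exact hforbidden ts (Or.inl ⟨rfl, rfl⟩) (Classical.arbitrary _) (HomEx.refl _)
  · intro hroot us hus _ hhom
    have heq : (Sum.inr ⟨R, us⟩ : Term σ) = Sum.inr ⟨S, ts⟩ :=
      by_contra fun hne => hmin R us hus hne hhom
    cases heq
    exact hroot rfl

end ConstantTemplate

/-- let `τ` have a single symbol `R₀`, let the template have `P = V₁` and
`Q_{R₀} = T(t_R)` for an S-term `t_R = edge_S(tsR)` which is minimal in the sense that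
`Q_{R₀}` does not map homomorphically to `T(t)` for any proper subterm `t` of `t_R`.  Then
`Ω(V₁)` is isomorphic to `D(t_R)`. -/
theorem omegaV_of_point_iso_dual {σ τ : Signature} (R0 : τ.symb) (huniq : ∀ R : τ.symb, R = R0)
    (S : σ.symb) (tsR : Fin (σ.ar S) → VTerm σ)
    (tq : τ.symb → Term σ) (htq : tq R0 = Sum.inr ⟨S, tsR⟩)
    (x : ∀ R : τ.symb, Fin (τ.ar R) → ((tq R).tree).dom)
    (hminV : ∀ t ∈ Term.vsub (σ := σ) (.inr ⟨S, tsR⟩),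
        ¬ HomEx (ETerm.tree S tsR) (VTerm.tree t))
    (hminE : ∀ S' : σ.symb, ∀ us ∈ Term.esub (σ := σ) (.inr ⟨S, tsR⟩) S',
        (Sum.inr ⟨S', us⟩ : Term σ) ≠ Sum.inr ⟨S, tsR⟩ →
        ¬ HomEx (ETerm.tree S tsR) (ETerm.tree S' us)) :
    ∃ f : (OmegaV tq x (VOne τ)).dom ≃ (Dual S tsR).dom,
      IsIso (OmegaV tq x (VOne τ)) (Dual S tsR) f := by
  have : Nonempty τ.symb := ⟨R0⟩
  have hconst : ∀ R, tq R = Sum.inr ⟨S, tsR⟩ := fun R => huniq R ▸ htq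
  rw [← templateDual_eq_dual hconst hminE]
  refine omegaV_of_point_iso_dual_general tq x fun R t ht => ?_
  rw [hconst R]
  exact hminV t (TVs_eq_vsub hconst ▸ ht)
end

section
/- Fix an integer k ≥ 1. Let D_k be the digraph whose vertices are the tuples u = (u_1,…,u_k) ∈ {true,false}^k with u_1 = true, and with (u, v) an edge if and only if u_k = false and, for every 1 ≤ i ≤ k−1, u_i implies v_{i+1}. Let L_k be the digraph with vertex set {1,…,k} and edge relation <. Then D_k and L_k are homomorphically equivalent; explicitly, the map sending i ∈ {1,…,k} to the tuple whose first i entries are true and whose remaining entries are false is a homomorphism L_k → D_k, and the map sending a tuple u whose entries begin with exactly i trues followed by a false (and sending the all-true tuple to k) to i is a homomorphism D_k → L_k. -/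
/-!
A homomorphism `D_k → L_k` is given by the length of the initial run of `true`s. An edge `(u, v)`
of `D_k` shifts the entries of `u` by one into `v`, and `v` starts with `true`, so the run of `v` is
longer than that of `u`; it has room to be longer because `u` ends with `false`.
Conversely, `m` initial `true`s shifted by one fit into any longer run of `true`s.
-/

/-- `f` is a homomorphism from the digraph `(V, E)` to the digraph `(W, F)`. -/
def DigraphHom {V W : Type} (E : V → V → Prop) (F : W → W → Prop) (f : V → W) : Prop :=
  ∀ u v, E u v → F (f u) (f v)

/-- Vertices of `D_k`: tuples `u ∈ {true, false}^k` (0-indexed, so `u 0` is the paper's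
`u_1`) with first entry `true`. -/
def DkVert (k : ℕ) (hk : 0 < k) : Type :=
  {u : Fin k → Bool // u ⟨0, hk⟩ = true}

/-- Edges of `D_k`: `(u, v)` is an edge iff the last entry of `u` is `false` and, for every
`i` with `i + 1 < k`, `u_i` implies `v_{i+1}`. -/
def DkAdj (k : ℕ) (hk : 0 < k) (u v : DkVert k hk) : Prop :=
  u.1 ⟨k - 1, by omega⟩ = false ∧
  ∀ (i : ℕ) (h : i + 1 < k), u.1 ⟨i, by omega⟩ = true → v.1 ⟨i + 1, h⟩ = true

/-- Edges of `L_k`: the strict order on its `k` vertices. -/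
def LkAdj (k : ℕ) (i j : Fin k) : Prop := (i : ℕ) < (j : ℕ)

section TrueRun

variable {k n : ℕ} {u : Fin k → Bool}

/-- The length of the initial run of `true`s of the tuple `u`; it equals `k` when every entry of `u`
is `true`. -/
def trueRun (u : Fin k → Bool) : ℕ :=
  Nat.findGreatest (fun n => ∀ j : Fin k, (j : ℕ) < n → u j = true) k

theorem trueRun_le (u : Fin k → Bool) : trueRun u ≤ k :=
  Nat.findGreatest_le k

theorem apply_eq_true_of_lt_trueRun {j : Fin k} (hj : (j : ℕ) < trueRun u) : u j = true :=
  Nat.findGreatest_spec (P := fun n => ∀ j : Fin k, (j : ℕ) < n → u j = true) k.zero_le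
    (fun j hj => absurd hj j.val.not_lt_zero) j hj

theorem le_trueRun (hn : n ≤ k) (htrue : ∀ j : Fin k, (j : ℕ) < n → u j = true) :
    n ≤ trueRun u :=
  Nat.le_findGreatest hn htrue

theorem trueRun_le_of_apply_eq_false {j : Fin k} (hj : u j = false) : trueRun u ≤ j := by
  by_contra! hlt
  exact Bool.false_ne_true (hj.symm.trans (apply_eq_true_of_lt_trueRun hlt))

theorem trueRun_eq (hn : n ≤ k) (htrue : ∀ j : Fin k, (j : ℕ) < n → u j = true)
    (hfalse : ∀ hnk : n < k, u ⟨n, hnk⟩ = false) : trueRun u = n := by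
  refine le_antisymm ?_ (le_trueRun hn htrue)
  rcases hn.eq_or_lt with rfl | hnk
  · exact trueRun_le u
  · exact trueRun_le_of_apply_eq_false (hfalse hnk)

end TrueRun

section Homomorphisms

variable {k : ℕ} {hk : 0 < k}

theorem DkVert.trueRun_pos (u : DkVert k hk) : 0 < trueRun u.1 := by
  refine le_trueRun hk fun j hj => ?_
  rw [show j = ⟨0, hk⟩ from Fin.ext (Nat.lt_one_iff.mp hj)]
  exact u.2

theorem DkAdj.trueRun_lt {u v : DkVert k hk} (huv : DkAdj k hk u v) :
    trueRun u.1 < trueRun v.1 := by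
  obtain ⟨hlast, hshift⟩ := huv
  have hroom : trueRun u.1 + 1 ≤ k := by
    have : trueRun u.1 ≤ k - 1 := trueRun_le_of_apply_eq_false hlast
    omega
  refine le_trueRun hroom ?_
  rintro ⟨_ | i, hi⟩ hlt
  · exact v.2
  · exact hshift i hi (apply_eq_true_of_lt_trueRun (Nat.lt_of_succ_lt_succ hlt))

/-- The map `D_k → L_k` sending a tuple to the last (0-indexed) position of its initial run of
`true`s, that is, to the vertex the paper numbers by the length of the run. -/
def DkVert.runEnd (u : DkVert k hk) : Fin k :=
  ⟨trueRun u.1 - 1, Nat.sub_one_lt_of_le u.trueRun_pos (trueRun_le u.1)⟩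

theorem digraphHom_runEnd : DigraphHom (DkAdj k hk) (LkAdj k) DkVert.runEnd :=
  fun u _ huv => Nat.sub_lt_sub_right u.trueRun_pos huv.trueRun_lt

/-- The map `L_k → D_k` sending `i` to the tuple that is `true` exactly up to the 0-indexed
position `i`, so that its run of `true`s has length `i + 1`. -/
def DkVert.ofRunEnd (hk : 0 < k) (i : Fin k) : DkVert k hk :=
  ⟨fun j => decide ((j : ℕ) ≤ (i : ℕ)), decide_eq_true i.val.zero_le⟩

theorem digraphHom_ofRunEnd : DigraphHom (LkAdj k) (DkAdj k hk) (DkVert.ofRunEnd hk) := by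
  intro i j (hij : (i : ℕ) < j)
  have hlast : (i : ℕ) < k - 1 := hij.trans_le (Nat.le_sub_one_of_lt j.2)
  refine ⟨decide_eq_false hlast.not_ge, fun a _ ha => ?_⟩
  have hai : a ≤ (i : ℕ) := of_decide_eq_true ha
  exact decide_eq_true (hai.trans_lt hij)

end Homomorphisms

/-- `D_k` and `L_k` are homomorphically equivalent; explicitly, the map sending
the `m`-th vertex of `L_k` (`m = i + 1` in 1-based counting) to the tuple whose first `m`
entries are `true` and whose remaining entries are `false` is a homomorphism `L_k → D_k`, and
the map sending a tuple beginning with exactly `i` `true`s followed by a `false` to the `i`-th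
vertex of `L_k` (and the all-`true` tuple to the `k`-th vertex) is a homomorphism
`D_k → L_k`. -/
theorem dk_hom_equiv_lk (k : ℕ) (hk : 0 < k) :
    DigraphHom (LkAdj k) (DkAdj k hk)
      (fun i => ⟨fun j => decide ((j : ℕ) ≤ (i : ℕ)), by simp⟩) ∧
    (∃ f : DkVert k hk → Fin k,
      (∀ (u : DkVert k hk) (i : ℕ) (hik : i ≤ k),
        (∀ j : Fin k, (j : ℕ) < i → u.1 j = true) →
        (∀ hi : i < k, u.1 ⟨i, hi⟩ = false) →
        ∀ h1 : 1 ≤ i, f u = ⟨i - 1, by omega⟩) ∧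
      DigraphHom (DkAdj k hk) (LkAdj k) f) ∧
    (∃ f, DigraphHom (DkAdj k hk) (LkAdj k) f) ∧
    (∃ g, DigraphHom (LkAdj k) (DkAdj k hk) g) := by
  refine ⟨digraphHom_ofRunEnd, ⟨DkVert.runEnd, ?_, digraphHom_runEnd⟩,
    ⟨_, digraphHom_runEnd⟩, ⟨_, digraphHom_ofRunEnd⟩⟩
  intro u i hik htrue hfalse _
  exact Fin.ext (congrArg (· - 1) (trueRun_eq hik htrue hfalse))
end
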